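/- Let Â = A + εB be an n×n dual matrix possessing a dual core generalized inverse Ĝ, and let C be a core inverse of A. Then Ĝ = C − ε·C·B·C if and only if rank(A²) = rank(A) and the rank of the n×2n block matrix [A B] equals rank(A). -/

import Mathlib

open Matrix

/-- The dual matrix `A + εB`, viewed as a matrix over the dual numbers `ℝ[ε]`. -/
def dm {n : ℕ} (A B : Matrix (Fin n) (Fin n) ℝ) :
    Matrix (Fin n) (Fin n) (DualNumber ℝ) :=
  fun i j => TrivSqZeroExt.inl (A i j) + TrivSqZeroExt.inr (B i j)

/-- A dual matrix has dual index one iff its column space equals that of its square,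
equivalently (as shown in the paper) there is a dual matrix `X` with `M² * X = M`. -/
def DualIndexOne {n : ℕ} (M : Matrix (Fin n) (Fin n) (DualNumber ℝ)) : Prop :=
  ∃ X : Matrix (Fin n) (Fin n) (DualNumber ℝ), M * M * X = M

/-- `G` is a group inverse of the real matrix `A`. -/
def IsGroupInv {n : ℕ} (A G : Matrix (Fin n) (Fin n) ℝ) : Prop :=
  A * G * A = A ∧ G * A * G = G ∧ A * G = G * A

/-- `X` is the Moore–Penrose inverse of the real matrix `A`. -/
def IsMoorePenrose {n : ℕ} (A X : Matrix (Fin n) (Fin n) ℝ) : Prop :=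
  A * X * A = A ∧ X * A * X = X ∧ (A * X)ᵀ = A * X ∧ (X * A)ᵀ = X * A

/-- `C` is a core inverse of the real matrix `A`. -/
def IsCoreInv {n : ℕ} (A C : Matrix (Fin n) (Fin n) ℝ) : Prop :=
  A * C * A = A ∧ A * (C * C) = C ∧ (A * C)ᵀ = A * C

/-- `G` is a dual group generalized inverse (DGGI) of the dual matrix `M`. -/
def IsDGGI {n : ℕ} (M G : Matrix (Fin n) (Fin n) (DualNumber ℝ)) : Prop :=
  M * G * M = M ∧ G * M * G = G ∧ M * G = G * M

/-- `X` is a dual Moore–Penrose generalized inverse (DMPGI) of the dual matrix `M`. -/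
def IsDMPGI {n : ℕ} (M X : Matrix (Fin n) (Fin n) (DualNumber ℝ)) : Prop :=
  M * X * M = M ∧ X * M * X = X ∧ (M * X)ᵀ = M * X ∧ (X * M)ᵀ = X * M

/-- `G` is a dual core generalized inverse (DCGI) of the dual matrix `M`. -/
def IsDCGI {n : ℕ} (M G : Matrix (Fin n) (Fin n) (DualNumber ℝ)) : Prop :=
  M * G * M = M ∧ M * (G * G) = G ∧ (M * G)ᵀ = M * G

theorem dm_mul {n : ℕ} (A B C D : Matrix (Fin n) (Fin n) ℝ) :
    dm A B * dm C D = dm (A * C) (A * D + B * C) := by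
  ext i j
  · simp [dm, Matrix.mul_apply, TrivSqZeroExt.fst_sum]
  · simp [dm, Matrix.mul_apply, TrivSqZeroExt.snd_sum, Finset.sum_add_distrib, mul_comm]

theorem dm_inj {n : ℕ} {A B C D : Matrix (Fin n) (Fin n) ℝ} (h : dm A B = dm C D) :
    A = C ∧ B = D := by
  constructor
  · ext i j
    simpa [dm] using congrArg TrivSqZeroExt.fst (congrFun (congrFun h i) j)
  · ext i j
    simpa [dm] using congrArg TrivSqZeroExt.snd (congrFun (congrFun h i) j)

theorem dm_transpose {n : ℕ} (A B : Matrix (Fin n) (Fin n) ℝ) :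
    (dm A B)ᵀ = dm Aᵀ Bᵀ := rfl

theorem dm_surj {n : ℕ} (G : Matrix (Fin n) (Fin n) (DualNumber ℝ)) :
    ∃ C D, G = dm C D := by
  refine ⟨fun i j => (G i j).fst, fun i j => (G i j).snd, ?_⟩
  ext i j <;> simp [dm]

theorem core_CAA {n : ℕ} {A C : Matrix (Fin n) (Fin n) ℝ} (h : IsCoreInv A C) :
    C * A * A = A := by
  obtain ⟨h1, h2, -⟩ := h
  have hPC : A * C * C = C := by rw [Matrix.mul_assoc, h2]
  have hPP : A * C * (A * C) = A * C := by rw [← Matrix.mul_assoc, h1]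
  have hUV : (A * (A * C) + (1 - A * C)) * (C * (A * C) + (1 - A * C)) = 1 := by
    have e1 : A * (A * C) * (C * (A * C)) = A * C := by
      calc A * (A * C) * (C * (A * C)) = A * (A * C * C) * (A * C) := by
            simp only [Matrix.mul_assoc]
        _ = _ := by rw [hPC, hPP]
    have e2 : A * (A * C) * (1 - A * C) = 0 := by
      rw [Matrix.mul_assoc, mul_sub, hPP]; simp
    have e3 : (1 - A * C) * (C * (A * C)) = 0 := by
      rw [← Matrix.mul_assoc, sub_mul, hPC]; simp
    have e4 : (1 - A * C) * (1 - A * C) = 1 - A * C := by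
      rw [sub_mul, mul_sub, mul_sub, hPP]; simp
    rw [add_mul, mul_add, mul_add, e1, e2, e3, e4]; abel
  have hVU := mul_eq_one_comm.mp hUV
  have h5 := congrArg (fun M => M * A) hVU
  have e1 : (A * (A * C) + (1 - A * C)) * A = A * A := by
    rw [add_mul, sub_mul, Matrix.mul_assoc A (A * C), h1]; simp
  have e2 : (C * (A * C) + (1 - A * C)) * (A * A) = C * A * A := by
    have e3 : A * C * (A * A) = A * A := by rw [← Matrix.mul_assoc, h1]
    rw [add_mul, sub_mul, Matrix.mul_assoc C, e3, Matrix.mul_assoc C]; simp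
  simp only [Matrix.mul_assoc _ _ A] at h5 e1 e2 ⊢
  simp only [Matrix.one_mul] at h5
  rw [e1, e2] at h5
  exact h5

theorem core_CAC {n : ℕ} {A C : Matrix (Fin n) (Fin n) ℝ} (h : IsCoreInv A C) :
    C * A * C = C := by
  have h' := core_CAA h
  obtain ⟨h1, h2, -⟩ := h
  calc C * A * C = C * A * (A * (C * C)) := by rw [h2]
    _ = C * A * A * (C * C) := by simp only [Matrix.mul_assoc]
    _ = C := by rw [h', h2]

theorem core_unique {n : ℕ} {A C D : Matrix (Fin n) (Fin n) ℝ} (h : IsCoreInv A C)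
    (k : IsCoreInv A D) : D = C := by
  have k' := core_CAA k
  have kk := core_CAC k
  obtain ⟨h1, h2, h3⟩ := h
  obtain ⟨k1, k2, k3⟩ := k
  have e : A * C = A * D := by
    calc A * C = (A * C)ᵀ := h3.symm
      _ = (A * D * (A * C))ᵀ := by rw [← Matrix.mul_assoc, k1]
      _ = A * C * (A * D) := by rw [Matrix.transpose_mul, h3, k3]
      _ = A * D := by rw [← Matrix.mul_assoc, h1]
  calc D = D * (A * D) := by rw [← Matrix.mul_assoc, kk]
    _ = D * A * (A * (C * C)) := by rw [← e, h2, Matrix.mul_assoc, e]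
    _ = D * A * A * (C * C) := by simp only [Matrix.mul_assoc]
    _ = C := by rw [k', h2]

theorem stmt16 {n : ℕ} (A B C : Matrix (Fin n) (Fin n) ℝ)
    (G : Matrix (Fin n) (Fin n) (DualNumber ℝ))
    (hG : IsDCGI (dm A B) G) (hC : IsCoreInv A C) :
    G = dm C (-(C * B * C)) ↔
      (A * A).rank = A.rank ∧ (Matrix.fromCols A B).rank = A.rank := by
  have hCAA := core_CAA hC
  have hCAC := core_CAC hC
  obtain ⟨X, D, rfl⟩ := dm_surj G
  obtain ⟨g1, g2, g3⟩ := hG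
  simp only [dm_mul, dm_transpose] at g1 g2 g3
  obtain ⟨f1, g1'⟩ := dm_inj g1
  obtain ⟨f2, g2'⟩ := dm_inj g2
  obtain ⟨f3, g3'⟩ := dm_inj g3
  clear g1 g2 g3
  rename' f1 => g1, f2 => g2, f3 => g3
  obtain rfl : X = C := core_unique hC ⟨g1, g2, g3⟩
  clear hC
  -- `S` is the dual part of the product
  have gD : A * X * D + (A * D + B * X) * X = D := by
    refine Eq.trans ?_ g2'
    simp only [mul_add, add_mul, Matrix.mul_assoc]; abel
  clear g2'
  have hPX : A * X * X = X := by rw [Matrix.mul_assoc, g2]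
  constructor
  · intro h
    obtain ⟨-, rfl⟩ := dm_inj h
    have hPS : A * X * (A * -(X * B * X) + B * X) = 0 := by
      have : A * X * (A * -(X * B * X)) = - (A * X * A * (X * B * X)) := by
        simp only [mul_neg, Matrix.mul_assoc]
      rw [mul_add, this, g1]; simp only [Matrix.mul_assoc]; abel
    have hSP : (A * -(X * B * X) + B * X) * (A * X) = 0 := by
      have := congrArg Matrix.transpose hPS
      rwa [Matrix.transpose_mul, g3, g3', Matrix.transpose_zero] at this
    have hSA : (A * -(X * B * X) + B * X) * A = 0 := by
      calc _ = (A * -(X * B * X) + B * X) * (A * X) * A := by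
            rw [Matrix.mul_assoc _ (A * X), g1]
        _ = 0 := by rw [hSP, Matrix.zero_mul]
    rw [hSA, add_zero] at g1'
    constructor
    · apply le_antisymm (Matrix.rank_mul_le_left _ _)
      have : A = A * A * (X * X * A) := by
        calc A = A * (A * (X * X)) * A := by rw [g2, g1]
          _ = _ := by simp only [Matrix.mul_assoc]
      conv_lhs => rw [this]
      exact Matrix.rank_mul_le_left _ _
    · apply le_antisymm
      · have : Matrix.fromCols A B = A * Matrix.fromCols 1 (X * B) := by
          rw [Matrix.mul_fromCols, ← Matrix.mul_assoc, g1', Matrix.mul_one]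
        rw [this]
        exact Matrix.rank_mul_le_left _ _
      · have : A = Matrix.fromCols A B *
            Matrix.fromRows (1 : Matrix (Fin n) (Fin n) ℝ) (0 : Matrix (Fin n) (Fin n) ℝ) := by
          rw [Matrix.fromCols_mul_fromRows]; simp
        conv_lhs => rw [this]
        exact Matrix.rank_mul_le_left _ _
  · rintro ⟨-, hr⟩
    have hle : LinearMap.range A.mulVecLin ≤ LinearMap.range (Matrix.fromCols A B).mulVecLin := by
      rintro _ ⟨v, rfl⟩
      exact ⟨Sum.elim v 0, by simp [Matrix.fromCols_mulVec]⟩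
    have heq := Submodule.eq_of_le_of_finrank_eq hle hr.symm
    have hPB : A * X * B = B := by
      apply Matrix.ext_of_mulVec_single
      intro j
      have : B *ᵥ Pi.single j 1 ∈ LinearMap.range A.mulVecLin := by
        rw [heq]
        exact ⟨Sum.elim 0 (Pi.single j 1), by
          rw [Matrix.mulVecLin_apply, Matrix.fromCols_mulVec, Sum.elim_comp_inl, Sum.elim_comp_inr,
            Matrix.mulVec_zero, zero_add]⟩
      obtain ⟨w, hw⟩ := this
      rw [Matrix.mulVecLin_apply] at hw
      rw [← Matrix.mulVec_mulVec, ← hw, Matrix.mulVec_mulVec, g1]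
    rw [hPB, add_eq_left] at g1'
    have hPS : A * X * (A * D + B * X) = A * D + B * X := by
      rw [mul_add, ← Matrix.mul_assoc, g1, ← Matrix.mul_assoc, hPB]
    have hS : A * D + B * X = 0 := by
      rw [← g3', ← hPS, Matrix.transpose_mul, g3, g3', ← Matrix.mul_assoc, g1', Matrix.zero_mul]
    rw [hS, Matrix.zero_mul, add_zero] at gD
    have hAZ : A * (D + X * B * X) = 0 := by
      rw [mul_add, ← hS, ← Matrix.mul_assoc, ← Matrix.mul_assoc, hPB]
    have hPZ : A * X * (D + X * B * X) = D + X * B * X := by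
      rw [mul_add, gD, ← Matrix.mul_assoc, ← Matrix.mul_assoc, hPX]
    have hZ : D + X * B * X = 0 := by
      calc D + X * B * X = X * A * A * X * (D + X * B * X) := by rw [hCAA, hPZ]
        _ = X * (A * (A * X * (D + X * B * X))) := by simp only [Matrix.mul_assoc]
        _ = 0 := by rw [hPZ, hAZ, Matrix.mul_zero]
    rw [eq_neg_of_add_eq_zero_left hZ]
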